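/- Let a ≥ 0. There exists a constant C(a) > 0 such that for every t ≠ 0 and every measurable φ : (0,∞) → ℂ with ∫₀^∞ |φ(y)| y^a dy < ∞, one has sup_{x>0} |S_a(t)φ(x)| ≤ C(a) |t|^{−(a+1)/2} ∫₀^∞ |φ(y)| y^a dy. -/

import Mathlib

open MeasureTheory Filter Set

noncomputable def besselJ (ν : ℂ) (z : ℝ) : ℂ :=
  ∑' k : ℕ, ((-1 : ℂ) ^ k / (Complex.Gamma (k + 1) * Complex.Gamma (ν + k + 1))) *
    ((z : ℂ) / 2) ^ (2 * (k : ℂ) + ν)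

noncomputable def Skernel (a x y t : ℝ) : ℂ :=
  if 0 < t then
    Complex.exp (-(Complex.I) * (((a + 1) * Real.pi / 4 : ℝ) : ℂ)) *
      (((2 * |t|) ^ (-(a + 1) / 2) : ℝ) : ℂ) *
      (((x * y / (2 * |t|)) ^ ((1 - a) / 2) : ℝ) : ℂ) *
      besselJ (((a - 1) / 2 : ℝ) : ℂ) (x * y / (2 * |t|)) *
      Complex.exp (Complex.I * ((((x ^ 2 + y ^ 2) / (4 * |t|)) : ℝ) : ℂ))
  else
    Complex.exp ((Complex.I) * (((a + 1) * Real.pi / 4 : ℝ) : ℂ)) *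
      (((2 * |t|) ^ (-(a + 1) / 2) : ℝ) : ℂ) *
      (((x * y / (2 * |t|)) ^ ((1 - a) / 2) : ℝ) : ℂ) *
      besselJ (((a - 1) / 2 : ℝ) : ℂ) (x * y / (2 * |t|)) *
      Complex.exp (-(Complex.I) * ((((x ^ 2 + y ^ 2) / (4 * |t|)) : ℝ) : ℂ))

noncomputable def Sop (a t : ℝ) (φ : ℝ → ℂ) (x : ℝ) : ℂ :=
  ∫ y in Ioi (0:ℝ), Skernel a x y t * φ y * ((y ^ a : ℝ) : ℂ)

/-!
Up to phases and powers, the kernel `S_a(x, y, t)` is the value at `z = xy / (2|t|)` of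
`z ^ (-ν) J_ν(z)` with `ν = (a - 1) / 2`, so the estimate amounts to boundedness of this function on
`z > 0`. Up to the factor `2 ^ (-ν)` it is the entire function `₀F₁(ν + 1; x)`, regularized, at
`x = -z² / 4`. Writing `b = ν + 1`, the relations `₀F₁(b; ·)' = ₀F₁(b + 1; ·)` and
`₀F₁(b; x) = x ₀F₁(b + 2; x) + b ₀F₁(b + 1; x)` show that the energy
`‖₀F₁(b; x)‖² - x ‖₀F₁(b + 1; x)‖²` has derivative `(2 Re b - 1) ‖₀F₁(b + 1; x)‖²`. It is therefore
nondecreasing when `Re b ≥ 1 / 2`, that is when `a ≥ 0`, and on `x ≤ 0` its value at `0` bounds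
`‖₀F₁(b; x)‖` by `1 / |Γ(b)|`.
-/

section RegularizedHypergeometric

open Complex (regularizedHGFun regularizedHGFunCoeff regularizedHGFunSeries)

variable {a b : Multiset ℂ}

theorem hasSum_regularizedHGFun (h : a.card ≤ b.card) (z : ℂ) :
    HasSum (fun n : ℕ => regularizedHGFunCoeff a b n * z ^ n) (regularizedHGFun a b z) := by
  have hz : z ∈ Metric.eball 0 (regularizedHGFunSeries a b).radius := by
    simp [Complex.radius_regularizedHGFunSeries_eq_top h]
  refine ((regularizedHGFunSeries a b).hasSum hz).congr_fun fun n => ?_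
  simp [mul_comm]

theorem regularizedHGFun_apply_zero (a b : Multiset ℂ) :
    regularizedHGFun a b 0 = (b.map Complex.Gamma).prod⁻¹ := by
  rw [regularizedHGFun, FormalMultilinearSeries.sum, tsum_eq_single 0 fun n hn => by simp [hn]]
  simp [regularizedHGFunCoeff]

theorem succ_mul_regularizedHGFunCoeff_succ (a b : Multiset ℂ) (n : ℕ) :
    (n + 1) * regularizedHGFunCoeff a b (n + 1) =
      a.prod * regularizedHGFunCoeff (a.map (· + 1)) (b.map (· + 1)) n := by
  have hnum : (a.map (ascPochhammer ℂ (n + 1)).eval).prod =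
      a.prod * ((a.map (· + 1)).map (ascPochhammer ℂ n).eval).prod := by
    simp [ascPochhammer_succ_left, Multiset.prod_map_mul]
  have hden : (b.map fun c => Complex.Gamma (c + (n + 1 : ℕ))) =
      (b.map (· + 1)).map fun c => Complex.Gamma (c + n) := by
    simp only [Multiset.map_map, Function.comp_def, Nat.cast_add_one, add_assoc, add_comm (1 : ℂ)]
  rw [regularizedHGFunCoeff, regularizedHGFunCoeff, hnum, hden, Nat.factorial_succ]
  push_cast
  field_simp

theorem hasDerivAt_regularizedHGFun (h : a.card ≤ b.card) (z : ℂ) :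
    HasDerivAt (regularizedHGFun a b)
      (a.prod * regularizedHGFun (a.map (· + 1)) (b.map (· + 1)) z) z := by
  set p := regularizedHGFunSeries a b
  have hz : ‖z‖ₑ < p.radius := by simp [p, Complex.radius_regularizedHGFunSeries_eq_top h]
  have hz_deriv : z ∈ Metric.eball 0 p.derivSeries.radius := by
    simpa using hz.trans_le p.radius_le_radius_derivSeries
  have hsum : HasSum (fun n => p.derivSeries n (fun _ => z) 1) (p.derivSeries.sum z 1) :=
    (p.derivSeries.hasSum hz_deriv).mapL (ContinuousLinearMap.apply ℂ ℂ 1)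
  have hshift := (hasSum_regularizedHGFun (a := a.map (· + 1)) (b := b.map (· + 1))
    (by simpa using h) z).mul_left a.prod
  refine p.hasFDerivAt_sum hz |>.hasDerivAt.congr_deriv (hsum.unique (hshift.congr_fun fun n => ?_))
  have hcoeff : p.derivSeries.coeff n 1 = (n + 1) * regularizedHGFunCoeff a b (n + 1) := by
    simp [p]
  rw [FormalMultilinearSeries.apply_eq_pow_smul_coeff, smul_apply, hcoeff,
    succ_mul_regularizedHGFunCoeff_succ, smul_eq_mul]
  ring

theorem hasSum_nat_mul_regularizedHGFunCoeff (h : a.card ≤ b.card) (z : ℂ) :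
    HasSum (fun n : ℕ => n * regularizedHGFunCoeff a b n * z ^ n)
      (z * (a.prod * regularizedHGFun (a.map (· + 1)) (b.map (· + 1)) z)) := by
  have hshift := hasSum_regularizedHGFun (a := a.map (· + 1)) (b := b.map (· + 1))
    (by simpa using h) z
  rw [← hasSum_nat_add_iff' 1]
  simp only [Finset.sum_range_one, Nat.cast_zero, zero_mul, sub_zero]
  refine ((hshift.mul_left a.prod).mul_left z).congr_fun fun n => ?_
  rw [Nat.cast_add_one, succ_mul_regularizedHGFunCoeff_succ]
  ring

theorem regularizedHGFunCoeff_cons (a b : Multiset ℂ) (c : ℂ) (n : ℕ) :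
    regularizedHGFunCoeff a (c ::ₘ b) n =
      (n + c) * regularizedHGFunCoeff a ((c + 1) ::ₘ b) n := by
  have hGamma : (Complex.Gamma (c + n))⁻¹ = (n + c) * (Complex.Gamma (c + 1 + n))⁻¹ := by
    rw [Complex.one_div_Gamma_eq_self_mul_one_div_Gamma_add_one, add_comm c, add_right_comm]
    ring_nf
  simp only [regularizedHGFunCoeff, Multiset.map_cons, Multiset.prod_cons, div_eq_mul_inv, mul_inv,
    hGamma]
  ring

theorem regularizedHGFun_cons (h : a.card ≤ b.card + 1) (c z : ℂ) :
    regularizedHGFun a (c ::ₘ b) z =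
      z * (a.prod * regularizedHGFun (a.map (· + 1)) ((c + 2) ::ₘ b.map (· + 1)) z) +
        c * regularizedHGFun a ((c + 1) ::ₘ b) z := by
  have hsum : HasSum (fun n : ℕ => regularizedHGFunCoeff a (c ::ₘ b) n * z ^ n)
      (z * (a.prod * regularizedHGFun (a.map (· + 1)) (((c + 1) ::ₘ b).map (· + 1)) z) +
        c * regularizedHGFun a ((c + 1) ::ₘ b) z) := by
    have hEuler := hasSum_nat_mul_regularizedHGFunCoeff (b := (c + 1) ::ₘ b) (by simpa using h) z
    have hbase := hasSum_regularizedHGFun (b := (c + 1) ::ₘ b) (by simpa using h) z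
    refine (hEuler.add (hbase.mul_left c)).congr_fun fun n => ?_
    rw [regularizedHGFunCoeff_cons]
    ring
  rw [(hasSum_regularizedHGFun (by simpa using h) z).unique hsum, Multiset.map_cons, add_assoc c,
    one_add_one_eq_two]

end RegularizedHypergeometric

section BesselFunction

open Complex (regularizedHGFun)
open scoped RealInnerProductSpace

/-- The energy `‖₀F₁(b; x)‖² - x ‖₀F₁(b + 1; x)‖²`, with `₀F₁` regularized. Since
`₀F₁(b + 1; ·)` is the derivative of `₀F₁(b; ·)`, this is the Lyapunov function of the
differential equation `x u'' + b u' = u` on the half-line `x ≤ 0`. -/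
noncomputable def hypergeometricEnergy (b : ℂ) (x : ℝ) : ℝ :=
  ‖regularizedHGFun 0 {b} x‖ ^ 2 - x * ‖regularizedHGFun 0 {b + 1} x‖ ^ 2

theorem hasDerivAt_regularizedHGFun_zero_singleton (b z : ℂ) :
    HasDerivAt (regularizedHGFun 0 {b}) (regularizedHGFun 0 {b + 1} z) z := by
  simpa using hasDerivAt_regularizedHGFun (a := 0) (b := {b}) (by simp) z

theorem regularizedHGFun_zero_singleton_contiguous (b z : ℂ) :
    regularizedHGFun 0 {b} z =
      z * regularizedHGFun 0 {b + 2} z + b * regularizedHGFun 0 {b + 1} z := by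
  simpa using regularizedHGFun_cons (a := 0) (b := 0) (by simp) b z

theorem hasDerivAt_hypergeometricEnergy (b : ℂ) (x : ℝ) :
    HasDerivAt (hypergeometricEnergy b)
      ((2 * b.re - 1) * ‖regularizedHGFun 0 {b + 1} x‖ ^ 2) x := by
  have hnormSq (c : ℂ) := (hasDerivAt_regularizedHGFun_zero_singleton c x).comp_ofReal.norm_sq
  have hinner : ⟪regularizedHGFun 0 {b} x, regularizedHGFun 0 {b + 1} x⟫ =
      x * ⟪regularizedHGFun 0 {b + 1} x, regularizedHGFun 0 {b + 2} x⟫ +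
        b.re * ‖regularizedHGFun 0 {b + 1} x‖ ^ 2 := by
    rw [regularizedHGFun_zero_singleton_contiguous b x]
    simp only [Complex.inner, ← Complex.normSq_eq_norm_sq, Complex.normSq_apply, Complex.mul_re,
      Complex.mul_im, Complex.add_re, Complex.add_im, Complex.conj_re, Complex.conj_im,
      Complex.ofReal_re, Complex.ofReal_im]
    ring
  refine ((hnormSq b).sub ((hasDerivAt_id x).mul (hnormSq (b + 1)))).congr_deriv ?_
  rw [add_assoc b, one_add_one_eq_two, hinner]
  simp only [id]
  ring

theorem monotone_hypergeometricEnergy {b : ℂ} (hb : 1 / 2 ≤ b.re) :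
    Monotone (hypergeometricEnergy b) :=
  monotone_of_hasDerivAt_nonneg (hasDerivAt_hypergeometricEnergy b) fun _ =>
    mul_nonneg (by linarith) (sq_nonneg _)

theorem norm_regularizedHGFun_zero_singleton_le {b : ℂ} (hb : 1 / 2 ≤ b.re) {x : ℝ} (hx : x ≤ 0) :
    ‖regularizedHGFun 0 {b} x‖ ≤ ‖Complex.Gamma b‖⁻¹ := by
  have hzero : regularizedHGFun 0 {b} 0 = (Complex.Gamma b)⁻¹ := by
    simpa using regularizedHGFun_apply_zero 0 {b}
  refine (pow_le_pow_iff_left₀ (norm_nonneg _) (by positivity) two_ne_zero).mp ?_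
  calc ‖regularizedHGFun 0 {b} x‖ ^ 2
      ≤ hypergeometricEnergy b x :=
        (le_sub_self_iff _).mpr <| mul_nonpos_of_nonpos_of_nonneg hx (sq_nonneg _)
    _ ≤ hypergeometricEnergy b 0 := monotone_hypergeometricEnergy hb hx
    _ = (‖Complex.Gamma b‖⁻¹) ^ 2 := by simp [hypergeometricEnergy, hzero]

theorem besselJ_eq_cpow_mul_regularizedHGFun (ν : ℂ) {z : ℝ} (hz : z ≠ 0) :
    besselJ ν z = ((z : ℂ) / 2) ^ ν * regularizedHGFun 0 {ν + 1} (-((z / 2) ^ 2 : ℝ)) := by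
  have hz2 : (z : ℂ) / 2 ≠ 0 := by simpa using hz
  refine HasSum.tsum_eq ?_
  refine ((hasSum_regularizedHGFun (a := 0) (b := {ν + 1}) (by simp) _).mul_left _).congr_fun
    fun k => ?_
  have hpow : ((z : ℂ) / 2) ^ (2 * (k : ℂ) + ν) = ((z : ℂ) / 2) ^ (2 * k) * (z / 2) ^ ν := by
    rw [Complex.cpow_add _ _ hz2, ← Complex.cpow_natCast, Nat.cast_mul, Nat.cast_ofNat]
  have hpow_neg : (-((z / 2) ^ 2 : ℝ) : ℂ) ^ k = (-1) ^ k * ((z : ℂ) / 2) ^ (2 * k) := by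
    push_cast
    rw [neg_pow, pow_mul]
  rw [hpow, hpow_neg, Complex.Gamma_nat_eq_factorial, add_right_comm]
  simp only [Complex.regularizedHGFunCoeff, Multiset.map_zero, Multiset.prod_zero,
    Multiset.map_singleton, Multiset.prod_singleton]
  ring

theorem norm_besselJ_le {ν : ℂ} (hν : -1 / 2 ≤ ν.re) {z : ℝ} (hz : 0 < z) :
    ‖besselJ ν z‖ ≤ (z / 2) ^ ν.re * ‖Complex.Gamma (ν + 1)‖⁻¹ := by
  have hpow : ‖((z : ℂ) / 2) ^ ν‖ = (z / 2) ^ ν.re := by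
    exact_mod_cast Complex.norm_cpow_eq_rpow_re_of_pos (half_pos hz) ν
  rw [besselJ_eq_cpow_mul_regularizedHGFun ν hz.ne', norm_mul, hpow]
  gcongr
  exact_mod_cast norm_regularizedHGFun_zero_singleton_le
    (by norm_num; linarith) (neg_nonpos.mpr (sq_nonneg (z / 2)))

end BesselFunction

theorem norm_Skernel (a t : ℝ) {x y : ℝ} (hxy : 0 ≤ x * y) :
    ‖Skernel a x y t‖ = (2 * |t|) ^ (-(a + 1) / 2) * (x * y / (2 * |t|)) ^ ((1 - a) / 2) *
      ‖besselJ (((a - 1) / 2 : ℝ) : ℂ) (x * y / (2 * |t|))‖ := by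
  have hphase (r : ℝ) : ‖Complex.exp (-Complex.I * r)‖ = 1 := by
    simpa using Complex.norm_exp_I_mul_ofReal (-r)
  have hrpow {r : ℝ} (hr : 0 ≤ r) (s : ℝ) : ‖((r ^ s : ℝ) : ℂ)‖ = r ^ s :=
    Complex.norm_of_nonneg (Real.rpow_nonneg hr s)
  rw [Skernel]
  split_ifs <;>
    rw [norm_mul, norm_mul, norm_mul, norm_mul, hrpow (by positivity), hrpow (by positivity)] <;>
    simp only [hphase, Complex.norm_exp_I_mul_ofReal, one_mul, mul_one]

theorem norm_Skernel_le {a x y t : ℝ} (ha : 0 ≤ a) (hx : 0 < x) (hy : 0 < y) (ht : t ≠ 0) :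
    ‖Skernel a x y t‖ ≤
      2 ^ (-a) * (Real.Gamma ((a + 1) / 2))⁻¹ * |t| ^ (-(a + 1) / 2) := by
  set z := x * y / (2 * |t|)
  have hz : 0 < z := by positivity
  have hJ : ‖besselJ (((a - 1) / 2 : ℝ) : ℂ) z‖ ≤
      (z / 2) ^ ((a - 1) / 2) * (Real.Gamma ((a + 1) / 2))⁻¹ := by
    have hGamma : 0 < Real.Gamma ((a + 1) / 2) := Real.Gamma_pos_of_pos (by positivity)
    have hν : (((a - 1) / 2 : ℝ) : ℂ) + 1 = ((a + 1) / 2 : ℝ) := by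
      push_cast
      ring
    simpa only [hν, Complex.ofReal_re, Complex.Gamma_ofReal, Complex.norm_real,
      Real.norm_of_nonneg hGamma.le] using
      norm_besselJ_le (ν := ((a - 1) / 2 : ℝ)) (by rw [Complex.ofReal_re]; linarith) hz
  have hcancel : z ^ ((1 - a) / 2) * (z / 2) ^ ((a - 1) / 2) = 2 ^ ((1 - a) / 2) := by
    rw [← neg_sub 1 a, neg_div, Real.rpow_neg (by positivity), ← div_eq_mul_inv,
      ← Real.div_rpow (by positivity) (by positivity), div_div_cancel₀ hz.ne']
  have htwo : (2 : ℝ) ^ (-(a + 1) / 2) * 2 ^ ((1 - a) / 2) = 2 ^ (-a) := by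
    rw [← Real.rpow_add two_pos]
    ring_nf
  calc ‖Skernel a x y t‖
      = (2 * |t|) ^ (-(a + 1) / 2) * z ^ ((1 - a) / 2) *
          ‖besselJ (((a - 1) / 2 : ℝ) : ℂ) z‖ := by
        rw [norm_Skernel a t (by positivity)]
    _ ≤ (2 * |t|) ^ (-(a + 1) / 2) * z ^ ((1 - a) / 2) *
          ((z / 2) ^ ((a - 1) / 2) * (Real.Gamma ((a + 1) / 2))⁻¹) := by gcongr
    _ = 2 ^ (-a) * (Real.Gamma ((a + 1) / 2))⁻¹ * |t| ^ (-(a + 1) / 2) := by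
        rw [Real.mul_rpow zero_le_two (abs_nonneg t), ← htwo, ← hcancel]
        ring

/-- Dispersive estimate for `a ≥ 0`:
`sup_{x>0} |S_a(t)φ(x)| ≤ C(a) |t|^{-(a+1)/2} ‖φ‖_{L¹_a}`. -/
theorem dispersive_estimate (a : ℝ) (ha : 0 ≤ a) :
    ∃ C > (0:ℝ), ∀ t : ℝ, t ≠ 0 → ∀ φ : ℝ → ℂ, Measurable φ →
      IntegrableOn (fun y => ‖φ y‖ * y ^ a) (Ioi 0) →
      ∀ x > (0:ℝ),
        ‖Sop a t φ x‖ ≤ C * |t| ^ (-(a + 1) / 2) * ∫ y in Ioi (0:ℝ), ‖φ y‖ * y ^ a := by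
  refine ⟨2 ^ (-a) * (Real.Gamma ((a + 1) / 2))⁻¹, by positivity, fun t ht φ _ hφ x hx => ?_⟩
  rw [← integral_const_mul]
  refine norm_integral_le_of_norm_le (hφ.const_mul _) ?_
  filter_upwards [ae_restrict_mem measurableSet_Ioi] with y (hy : 0 < y)
  rw [norm_mul, norm_mul, Complex.norm_real, Real.norm_of_nonneg (by positivity), mul_assoc]
  gcongr
  exact norm_Skernel_le ha hx hy ht
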